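/- Let K_1, …, K_K be real symmetric positive semidefinite n×n matrices, λ > 0, S_k = (K_k + λI_n)⁻¹, M_λ = λ·Σ_{k=1}^K S_k, and d ≤ n. Let γ_1 ≤ … ≤ γ_n be the eigenvalues of M_λ counted with multiplicity. Then the minimum of Σ_{k=1}^K ( ‖K_kΓ_k − Z‖_F² + λ·tr(Γ_kᵀK_kΓ_k) ) over all Z ∈ ℝ^{n×d} with ZᵀZ = I_d and all Γ_k ∈ ℝ^{n×d} equals Σ_{j=1}^d γ_j. Moreover, for any d×d orthogonal matrix O, this minimum is attained at Z* = U_dO, where the columns of U_d are orthonormal eigenvectors of M_λ corresponding to γ_1, …, γ_d, with Γ_k = S_kZ* for each k. -/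

import Mathlib

open Matrix

/-- Squared Frobenius norm of a real matrix: `‖M‖_F² = tr(MᵀM)`. -/
noncomputable def frobSq {n m : ℕ} (M : Matrix (Fin n) (Fin m) ℝ) : ℝ := (Mᵀ * M).trace

lemma aux_f {n d : ℕ} (K : Matrix (Fin n) (Fin n) ℝ) (hK : K.PosSemidef) (lam : ℝ)
    (Y D : Matrix (Fin n) (Fin d) ℝ) :
    frobSq (K * (Y + D) - (K + lam • 1) * Y) + lam * ((Y + D)ᵀ * K * (Y + D)).trace
      = lam * (Yᵀ * ((K + lam • 1) * Y)).trace + frobSq (K * D) + lam * (Dᵀ * K * D).trace := by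
  have hT : Kᵀ = K := by
    have := hK.1
    rwa [Matrix.IsHermitian, conjTranspose_eq_transpose_of_trivial] at this
  have h1 : K * (Y + D) - (K + lam • 1) * Y = K * D - lam • Y := by
    rw [Matrix.mul_add, Matrix.add_mul, Matrix.smul_mul, Matrix.one_mul]; abel
  have h2 : (Yᵀ * K * D).trace = (Dᵀ * K * Y).trace := by
    rw [← Matrix.trace_transpose]
    simp [Matrix.transpose_mul, hT, Matrix.mul_assoc]
  rw [h1]
  simp only [frobSq, Matrix.transpose_sub, Matrix.transpose_add, Matrix.transpose_mul,
    Matrix.transpose_smul, hT, Matrix.mul_add, Matrix.add_mul, Matrix.mul_sub, Matrix.sub_mul,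
    Matrix.smul_mul, Matrix.mul_smul, Matrix.trace_add, Matrix.trace_sub, Matrix.trace_smul,
    smul_eq_mul, Matrix.one_mul, ← Matrix.mul_assoc, h2]
  ring

lemma aux_inv {n : ℕ} (K : Matrix (Fin n) (Fin n) ℝ) (hK : K.PosSemidef) (lam : ℝ)
    (hlam : 0 < lam) : (K + lam • 1) * (K + lam • 1)⁻¹ = 1 := by
  have : (K + lam • (1 : Matrix (Fin n) (Fin n) ℝ)).PosDef :=
    Matrix.PosDef.posSemidef_add hK (Matrix.PosDef.one.smul hlam)
  exact Matrix.mul_nonsing_inv _ this.det_pos.ne'.isUnit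

lemma aux_symm {n : ℕ} (K : Matrix (Fin n) (Fin n) ℝ) (hK : K.PosSemidef) (lam : ℝ) :
    ((K + lam • 1)⁻¹)ᵀ = (K + lam • 1)⁻¹ := by
  have hT : Kᵀ = K := by
    have := hK.1
    rwa [Matrix.IsHermitian, conjTranspose_eq_transpose_of_trivial] at this
  rw [Matrix.transpose_nonsing_inv]
  simp [hT]

lemma aux_frob_nonneg {n d : ℕ} (M : Matrix (Fin n) (Fin d) ℝ) : 0 ≤ frobSq M := by
  simp only [frobSq, Matrix.trace, Matrix.diag, Matrix.mul_apply, Matrix.transpose_apply]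
  exact Finset.sum_nonneg fun i _ => Finset.sum_nonneg fun j _ => mul_self_nonneg _

lemma aux_eq {n d : ℕ} (K : Matrix (Fin n) (Fin n) ℝ) (hK : K.PosSemidef) (lam : ℝ)
    (hlam : 0 < lam) (Z : Matrix (Fin n) (Fin d) ℝ) :
    frobSq (K * ((K + lam • 1)⁻¹ * Z) - Z)
      + lam * (((K + lam • 1)⁻¹ * Z)ᵀ * K * ((K + lam • 1)⁻¹ * Z)).trace
      = (Zᵀ * (lam • (K + lam • 1)⁻¹) * Z).trace := by
  have h := aux_f K hK lam ((K + lam • 1)⁻¹ * Z) 0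
  rw [← Matrix.mul_assoc (K + lam • 1), aux_inv K hK lam hlam, Matrix.one_mul, add_zero] at h
  rw [h, Matrix.transpose_mul, aux_symm K hK]
  simp [frobSq]

lemma aux_le {n d : ℕ} (K : Matrix (Fin n) (Fin n) ℝ) (hK : K.PosSemidef) (lam : ℝ)
    (hlam : 0 < lam) (Z G : Matrix (Fin n) (Fin d) ℝ) :
    (Zᵀ * (lam • (K + lam • 1)⁻¹) * Z).trace ≤
    frobSq (K * G - Z) + lam * (Gᵀ * K * G).trace := by
  have h := aux_f K hK lam ((K + lam • 1)⁻¹ * Z) (G - (K + lam • 1)⁻¹ * Z)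
  rw [← Matrix.mul_assoc (K + lam • 1), aux_inv K hK lam hlam, Matrix.one_mul,
    add_sub_cancel] at h
  rw [h, Matrix.transpose_mul, aux_symm K hK]
  have h1 := aux_frob_nonneg (K * (G - (K + lam • 1)⁻¹ * Z))
  have h2 : 0 ≤ ((G - (K + lam • 1)⁻¹ * Z)ᵀ * K * (G - (K + lam • 1)⁻¹ * Z)).trace := by
    have := (hK.conjTranspose_mul_mul_same (G - (K + lam • 1)⁻¹ * Z)).trace_nonneg
    rwa [conjTranspose_eq_transpose_of_trivial] at this
  have h3 := mul_nonneg hlam.le h2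
  simp only [Matrix.mul_smul, Matrix.smul_mul, Matrix.trace_smul, smul_eq_mul]
  linarith

lemma aux_sum {n d : ℕ} (hd : d ≤ n) (g : Fin n → ℝ) :
    ∑ i : Fin n, (if (i : ℕ) < d then g i else 0) = ∑ j : Fin d, g (Fin.castLE hd j) := by
  obtain ⟨m, rfl⟩ := Nat.exists_eq_add_of_le hd
  rw [Fin.sum_univ_add]
  simp
  rfl

lemma aux_weights {n d : ℕ} (hd : d ≤ n) (γ : Fin n → ℝ) (hγ : Monotone γ) (w : Fin n → ℝ)
    (h0 : ∀ i, 0 ≤ w i) (h1 : ∀ i, w i ≤ 1) (hs : ∑ i, w i = d) :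
    ∑ j : Fin d, γ (Fin.castLE hd j) ≤ ∑ i, γ i * w i := by
  obtain ⟨c, hc1, hc2⟩ : ∃ c : ℝ, (∀ i : Fin n, (i : ℕ) < d → γ i ≤ c) ∧
      (∀ i : Fin n, d ≤ (i : ℕ) → c ≤ γ i) := by
    rcases Nat.eq_zero_or_pos d with rfl | hpos
    · rcases Nat.eq_zero_or_pos n with rfl | hn
      · exact ⟨0, fun i => i.elim0, fun i => i.elim0⟩
      · exact ⟨γ ⟨0, hn⟩, fun i hi => absurd hi (by omega), fun i _ => hγ (by simp [Fin.le_def])⟩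
    · exact ⟨γ ⟨d - 1, by omega⟩, fun i hi => hγ (by simp [Fin.le_def]; omega),
        fun i hi => hγ (by simp [Fin.le_def]; omega)⟩
  have e1 := aux_sum hd γ
  have e2 := aux_sum hd (fun _ => (1 : ℝ))
  simp only [Finset.sum_const, Finset.card_univ, Fintype.card_fin, nsmul_eq_mul, mul_one] at e2
  have key : 0 ≤ ∑ i, (γ i * w i - (if (i : ℕ) < d then γ i else 0)
      - c * (w i - (if (i : ℕ) < d then 1 else 0))) := by
    refine Finset.sum_nonneg fun i _ => ?_
    split_ifs with h
    · nlinarith [hc1 i h, h1 i]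
    · nlinarith [hc2 i (not_lt.mp h), h0 i]
  rw [Finset.sum_sub_distrib, Finset.sum_sub_distrib, ← Finset.mul_sum, Finset.sum_sub_distrib,
    e1, e2, hs] at key
  linarith

lemma aux_kyfan {n d : ℕ} (hd : d ≤ n) (γ : Fin n → ℝ) (hγ : Monotone γ)
    (W : Matrix (Fin n) (Fin d) ℝ) (hW : Wᵀ * W = 1) :
    ∑ j : Fin d, γ (Fin.castLE hd j) ≤ (Wᵀ * Matrix.diagonal γ * W).trace := by
  have hP : (W * Wᵀ) * (W * Wᵀ) = W * Wᵀ := by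
    rw [Matrix.mul_assoc, ← Matrix.mul_assoc Wᵀ, hW, Matrix.one_mul]
  have hPT : (W * Wᵀ)ᵀ = W * Wᵀ := by simp
  have hsq : ∀ i, (W * Wᵀ) i i = ∑ j, (W * Wᵀ) i j ^ 2 := by
    intro i
    conv_lhs => rw [← hP]
    rw [Matrix.mul_apply]
    refine Finset.sum_congr rfl fun j _ => ?_
    have : (W * Wᵀ) j i = (W * Wᵀ) i j := congrFun (congrFun hPT i) j
    rw [this, sq]
  have h := aux_weights hd γ hγ (fun i => (W * Wᵀ) i i)
    (fun i => by
      show 0 ≤ (W * Wᵀ) i i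
      rw [hsq]; positivity)
    (fun i => by
      show (W * Wᵀ) i i ≤ 1
      have h2 : (W * Wᵀ) i i ^ 2 ≤ (W * Wᵀ) i i := by
        conv_rhs => rw [hsq]
        exact Finset.single_le_sum (f := fun j => (W * Wᵀ) i j ^ 2)
          (fun j _ => sq_nonneg _) (Finset.mem_univ i)
      nlinarith)
    (by
      show (W * Wᵀ).trace = d
      rw [Matrix.trace_mul_comm, hW]; simp)
  refine h.trans (le_of_eq ?_)
  rw [Matrix.mul_assoc, Matrix.trace_mul_comm, Matrix.mul_assoc]
  simp [Matrix.trace, Matrix.diagonal_mul]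

lemma aux_total {n d Kn : ℕ} (A : Fin Kn → Matrix (Fin n) (Fin n) ℝ) (lam : ℝ)
    (Z : Matrix (Fin n) (Fin d) ℝ) :
    ∑ k, (Zᵀ * (lam • A k) * Z).trace = (Zᵀ * (lam • ∑ k, A k) * Z).trace := by
  rw [Finset.smul_sum, Matrix.mul_sum, Matrix.sum_mul, Matrix.trace_sum]

/-- Theorem 2 + Ky Fan minimum principle: with `S_k = (K_k + λI)⁻¹`,
`M_λ = λ·Σ_k S_k = U diag(γ) Uᵀ` an orthogonal eigendecomposition with `γ` monotone, the
minimum of `Σ_k (‖K_kΓ_k − Z‖_F² + λ·tr(Γ_kᵀK_kΓ_k))` over `ZᵀZ = I` and all `Γ_k` equals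
the sum of the `d` smallest eigenvalues of `M_λ`, and for any orthogonal `O` it is attained
at `Z* = U_dO` with `Γ_k = S_kZ*`. -/
theorem stmt11 {n d Kn : ℕ} (hd : d ≤ n)
    (Ks : Fin Kn → Matrix (Fin n) (Fin n) ℝ) (hKs : ∀ k, (Ks k).PosSemidef)
    (lam : ℝ) (hlam : 0 < lam)
    (U : Matrix (Fin n) (Fin n) ℝ) (hU : Uᵀ * U = 1)
    (γ : Fin n → ℝ) (hγ : Monotone γ)
    (hdiag : (lam • ∑ k, (Ks k + lam • 1)⁻¹ : Matrix (Fin n) (Fin n) ℝ)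
        = U * Matrix.diagonal γ * Uᵀ) :
    IsLeast {t : ℝ | ∃ (Z : Matrix (Fin n) (Fin d) ℝ)
        (G : Fin Kn → Matrix (Fin n) (Fin d) ℝ),
        Zᵀ * Z = 1 ∧
        t = ∑ k, (frobSq (Ks k * G k - Z) + lam * ((G k)ᵀ * Ks k * G k).trace)}
      (∑ j : Fin d, γ (Fin.castLE hd j)) ∧
    ∀ O : Matrix (Fin d) (Fin d) ℝ, Oᵀ * O = 1 →
      (U.submatrix id (Fin.castLE hd) * O)ᵀ * (U.submatrix id (Fin.castLE hd) * O) = 1 ∧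
      ∑ k, (frobSq (Ks k * ((Ks k + lam • 1)⁻¹ * (U.submatrix id (Fin.castLE hd) * O))
              - U.submatrix id (Fin.castLE hd) * O)
          + lam * (((Ks k + lam • 1)⁻¹ * (U.submatrix id (Fin.castLE hd) * O))ᵀ
              * Ks k * ((Ks k + lam • 1)⁻¹ * (U.submatrix id (Fin.castLE hd) * O))).trace)
        = ∑ j : Fin d, γ (Fin.castLE hd j) := by
  have hUU : U * Uᵀ = 1 := mul_eq_one_comm.mp hU
  have att : ∀ O : Matrix (Fin d) (Fin d) ℝ, Oᵀ * O = 1 →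
      (U.submatrix id (Fin.castLE hd) * O)ᵀ * (U.submatrix id (Fin.castLE hd) * O) = 1 ∧
      ∑ k, (frobSq (Ks k * ((Ks k + lam • 1)⁻¹ * (U.submatrix id (Fin.castLE hd) * O))
              - U.submatrix id (Fin.castLE hd) * O)
          + lam * (((Ks k + lam • 1)⁻¹ * (U.submatrix id (Fin.castLE hd) * O))ᵀ
              * Ks k * ((Ks k + lam • 1)⁻¹ * (U.submatrix id (Fin.castLE hd) * O))).trace)
        = ∑ j : Fin d, γ (Fin.castLE hd j) := by
    intro O hO
    have hOO : O * Oᵀ = 1 := mul_eq_one_comm.mp hO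
    have hinj : Function.Injective (Fin.castLE hd) := Fin.castLE_injective hd
    have hS : ∀ B : Matrix (Fin n) (Fin n) ℝ,
        (U.submatrix id (Fin.castLE hd))ᵀ * B * U.submatrix id (Fin.castLE hd)
        = (Uᵀ * B * U).submatrix (Fin.castLE hd) (Fin.castLE hd) := fun B => rfl
    constructor
    · have h1 := hS 1
      rw [Matrix.mul_one, Matrix.mul_one, hU, Matrix.submatrix_one _ hinj] at h1
      rw [Matrix.transpose_mul, Matrix.mul_assoc, ← Matrix.mul_assoc _ _ O, h1, Matrix.one_mul, hO]
    · rw [Finset.sum_congr rfl fun k _ => aux_eq (Ks k) (hKs k) lam hlam _, aux_total, hdiag]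
      have h1 := hS (U * Matrix.diagonal γ * Uᵀ)
      have h2 : Uᵀ * (U * Matrix.diagonal γ * Uᵀ) * U = Matrix.diagonal γ := by
        rw [Matrix.mul_assoc, Matrix.mul_assoc (U * _), hU, Matrix.mul_one, ← Matrix.mul_assoc, hU,
          Matrix.one_mul]
      rw [h2] at h1
      rw [← Matrix.mul_assoc, Matrix.trace_mul_comm, Matrix.transpose_mul, Matrix.mul_assoc Oᵀ,
        Matrix.mul_assoc Oᵀ, h1, ← Matrix.mul_assoc, hOO, Matrix.one_mul]
      simp [Matrix.trace]
  refine ⟨⟨?_, ?_⟩, att⟩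
  · obtain ⟨h1, h2⟩ := att 1 (by simp)
    exact ⟨_, _, h1, h2.symm⟩
  · rintro t ⟨Z, G, hZ, rfl⟩
    refine le_trans ?_ (Finset.sum_le_sum fun k _ => aux_le (Ks k) (hKs k) lam hlam Z (G k))
    rw [aux_total, hdiag]
    have hW : (Uᵀ * Z)ᵀ * (Uᵀ * Z) = 1 := by
      rw [Matrix.transpose_mul, Matrix.transpose_transpose, Matrix.mul_assoc,
        ← Matrix.mul_assoc U, hUU, Matrix.one_mul, hZ]
    have := aux_kyfan hd γ hγ (Uᵀ * Z) hW
    rw [Matrix.transpose_mul, Matrix.transpose_transpose] at this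
    simpa only [Matrix.mul_assoc] using this
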